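/- Let m ≥ 2 be an integer. Then there exist t₀ > 0 and C > 0 such that for all t > t₀ and all u ∈ [−1,1]: 1 + Σ_{l=1}^∞ c_{m,l}^t(u) > 0, and | ln(1 + Σ_{l=1}^∞ c_{m,l}^t(u)) − Σ_{l=2}^∞ c_{m,l}^t(u) + (1/2)·Σ_{n=4}^∞ d_{m,n}^t(u) | ≤ C · | Σ_{k=6}^∞ h_{m,k}^t(u) |. -/

import Mathlib

/-- The Gegenbauer polynomials `C_l^α`, defined by the recurrence
`C_0^α(u) = 1`, `C_1^α(u) = 2αu`, and
`C_l^α(u) = (2u(l+α−1)C_{l−1}^α(u) − (l+2α−2)C_{l−2}^α(u))/l` for `l ≥ 2`. -/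
noncomputable def gegenbauer (α : ℝ) : ℕ → ℝ → ℝ
  | 0, _ => 1
  | 1, u => 2 * α * u
  | (l + 2), u =>
      (2 * u * (((l : ℝ) + 2) + α - 1) * gegenbauer α (l + 1) u
        - (((l : ℝ) + 2) + 2 * α - 2) * gegenbauer α l u) / ((l : ℝ) + 2)

/-- `c_{m,l}^t(u)`: the coefficient functions of the heat kernel expansion on `ℝP^m`,
zero for `l` odd or `l = 0`. -/
noncomputable def cmt (m : ℕ) (t : ℝ) (l : ℕ) (u : ℝ) : ℝ :=
  if l % 2 = 0 ∧ l ≠ 0 then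
    Real.exp (-((l : ℝ) * ((l : ℝ) + (m : ℝ) - 1)) * t / 2)
      * ((2 * (l : ℝ) + (m : ℝ) - 1) / ((m : ℝ) - 1))
      * gegenbauer (((m : ℝ) - 1) / 2) l u
  else 0

/-- `d_{m,n}^t(u) := Σ_{l=0}^n c_{m,l}^t(u)·c_{m,n−l}^t(u)` (Cauchy product coefficients). -/
noncomputable def dmt (m : ℕ) (t : ℝ) (n : ℕ) (u : ℝ) : ℝ :=
  ∑ l ∈ Finset.range (n + 1), cmt m t l u * cmt m t (n - l) u

/-- `h_{m,k}^t(u) := Σ_{n=0}^k d_{m,n}^t(u)·c_{m,k−n}^t(u)` (triple Cauchy product coefficients). -/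
noncomputable def hmt (m : ℕ) (t : ℝ) (k : ℕ) (u : ℝ) : ℝ :=
  ∑ n ∈ Finset.range (k + 1), dmt m t n u * cmt m t (k - n) u

lemma gegenbauer_bound (m : ℕ) (hm : 2 ≤ m) (u : ℝ) (hu : |u| ≤ 1) (l : ℕ) :
    |gegenbauer (((m : ℝ) - 1) / 2) l u| ≤ (2 * (m : ℝ) + 1) ^ l ∧
    |gegenbauer (((m : ℝ) - 1) / 2) (l + 1) u| ≤ (2 * (m : ℝ) + 1) ^ (l + 1) := by
  have hm' : (2 : ℝ) ≤ m := by exact_mod_cast hm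
  induction l with
  | zero =>
    refine ⟨by simp [gegenbauer], ?_⟩
    simp only [gegenbauer, zero_add, pow_one]
    rw [abs_mul, abs_of_nonneg (by linarith)]
    nlinarith [abs_nonneg u]
  | succ l ih =>
    refine ⟨ih.2, ?_⟩
    obtain ⟨h0, h1⟩ := ih
    have hl : (0 : ℝ) ≤ l := Nat.cast_nonneg l
    have e : gegenbauer (((m : ℝ) - 1) / 2) (l + 1 + 1) u =
      (2 * u * (((l : ℝ) + 2) + ((m : ℝ) - 1) / 2 - 1) * gegenbauer (((m : ℝ) - 1) / 2) (l + 1) u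
        - (((l : ℝ) + 2) + 2 * (((m : ℝ) - 1) / 2) - 2) * gegenbauer (((m : ℝ) - 1) / 2) l u)
          / ((l : ℝ) + 2) := by
      rw [gegenbauer]
    rw [e, abs_div, abs_of_pos (show (0 : ℝ) < l + 2 by linarith), div_le_iff₀ (by linarith)]
    refine (abs_sub _ _).trans ?_
    rw [abs_mul, abs_mul, abs_mul, abs_mul, abs_two,
      abs_of_nonneg (show (0 : ℝ) ≤ ((l : ℝ) + 2) + ((m : ℝ) - 1) / 2 - 1 by linarith),
      abs_of_nonneg (show (0 : ℝ) ≤ ((l : ℝ) + 2) + 2 * (((m : ℝ) - 1) / 2) - 2 by linarith)]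
    set K : ℝ := 2 * (m : ℝ) + 1 with hK
    have hKp : 0 < K ^ l := by positivity
    have b1 : 2 * |u| * (((l : ℝ) + 2) + ((m : ℝ) - 1) / 2 - 1) *
        |gegenbauer (((m : ℝ) - 1) / 2) (l + 1) u| ≤
        2 * 1 * (((l : ℝ) + 2) + ((m : ℝ) - 1) / 2 - 1) * K ^ (l + 1) := by
      have : (0 : ℝ) ≤ ((l : ℝ) + 2) + ((m : ℝ) - 1) / 2 - 1 := by linarith
      gcongr
    have b2 : (((l : ℝ) + 2) + 2 * (((m : ℝ) - 1) / 2) - 2) *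
        |gegenbauer (((m : ℝ) - 1) / 2) l u| ≤
        (((l : ℝ) + 2) + 2 * (((m : ℝ) - 1) / 2) - 2) * K ^ l := by
      have : (0 : ℝ) ≤ ((l : ℝ) + 2) + 2 * (((m : ℝ) - 1) / 2) - 2 := by linarith
      gcongr
    refine (add_le_add b1 b2).trans ?_
    have key : 0 ≤ K ^ 2 * ((l : ℝ) + 2) - 2 * (((l : ℝ) + 2) + ((m : ℝ) - 1) / 2 - 1) * K
        - (((l : ℝ) + 2) + 2 * (((m : ℝ) - 1) / 2) - 2) := by
      have hlm : 0 ≤ (l : ℝ) * m := by positivity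
      have hlm2 : 0 ≤ (l : ℝ) * m * m := by positivity
      rw [hK]
      nlinarith
    have := mul_nonneg hKp.le key
    simp only [pow_succ] at *
    nlinarith

lemma cmt_bound (m : ℕ) (hm : 2 ≤ m) (t : ℝ) (ht : 0 ≤ t) (u : ℝ) (hu : |u| ≤ 1) (l : ℕ) :
    |cmt m t l u| ≤ (Real.exp (-t / 2) * 3 * (2 * (m : ℝ) + 1)) ^ l := by
  have hm' : (2 : ℝ) ≤ m := by exact_mod_cast hm
  unfold cmt
  split_ifs with h
  · have hl : (0 : ℝ) ≤ l := Nat.cast_nonneg l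
    rw [abs_mul, abs_mul, mul_pow, mul_pow, ← Real.exp_nat_mul, Real.abs_exp]
    have h1 : -((l : ℝ) * ((l : ℝ) + (m : ℝ) - 1)) * t / 2 ≤ (l : ℝ) * (-t / 2) := by
      have : 0 ≤ ((l : ℝ) * t) * ((l : ℝ) + m - 2) :=
        mul_nonneg (mul_nonneg hl ht) (by linarith)
      nlinarith
    have h2 : |(2 * (l : ℝ) + (m : ℝ) - 1) / ((m : ℝ) - 1)| ≤ 3 ^ l := by
      rw [abs_of_nonneg (div_nonneg (by linarith) (by linarith)), div_le_iff₀ (by linarith)]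
      have := one_add_mul_le_pow (show (-2 : ℝ) ≤ 2 by norm_num) l
      norm_num at this
      nlinarith
    have h3 := (gegenbauer_bound m hm u hu l).1
    gcongr
  · simp only [abs_zero]; positivity

lemma log_taylor_aux (q : ℝ) (hq0 : 0 < q) (hq4 : q ≤ 1 / 4) (c d h : ℕ → ℝ)
    (hb : ∀ l, |c l| ≤ q ^ l) (c0 : c 0 = 0) (c1 : c 1 = 0) (c3 : c 3 = 0)
    (hdc : ∀ n, d n = ∑ l ∈ Finset.range (n + 1), c l * c (n - l))
    (hhc : ∀ n, h n = ∑ l ∈ Finset.range (n + 1), d l * c (n - l)) :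
    0 < 1 + ∑' l : ℕ, c (l + 1) ∧
      |Real.log (1 + ∑' l : ℕ, c (l + 1)) - (∑' l : ℕ, c (l + 2))
          + (1/2) * ∑' n : ℕ, d (n + 4)| ≤ 2 * |∑' k : ℕ, h (k + 6)| := by
  have hgeo : Summable fun l : ℕ => q ^ l :=
    summable_geometric_of_lt_one hq0.le (by linarith)
  have hcn : Summable fun l => ‖c l‖ :=
    Summable.of_nonneg_of_le (fun _ => norm_nonneg _) hb hgeo
  have hcs : Summable c := hcn.of_norm
  have hdn : Summable fun n => ‖d n‖ := by
    simp only [hdc]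
    exact summable_norm_sum_mul_range_of_summable_norm hcn hcn
  have hhn : Summable fun n => ‖h n‖ := by
    simp only [hhc]
    exact summable_norm_sum_mul_range_of_summable_norm hdn hcn
  set S : ℝ := ∑' l, c l with hS
  have hD : ∑' n, d n = S * S := by
    simp only [hdc]
    exact (tsum_mul_tsum_eq_tsum_sum_range_of_summable_norm hcn hcn).symm
  have hH : ∑' n, h n = S * S * S := by
    rw [← hD]
    simp only [hhc]
    exact (tsum_mul_tsum_eq_tsum_sum_range_of_summable_norm hdn hcn).symm
  have d0 : d 0 = 0 := by simp [hdc, Finset.sum_range_succ, c0]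
  have d1 : d 1 = 0 := by simp [hdc, Finset.sum_range_succ, c0]
  have d2 : d 2 = 0 := by simp [hdc, Finset.sum_range_succ, c0, c1]
  have d3 : d 3 = 0 := by simp [hdc, Finset.sum_range_succ, c0, c1]
  have d5 : d 5 = 0 := by simp [hdc, Finset.sum_range_succ, c0, c1, c3]
  have e1 : ∑' l : ℕ, c (l + 1) = S := by
    have := hcs.sum_add_tsum_nat_add 1
    simpa [Finset.sum_range_succ, c0] using this
  have e2 : ∑' l : ℕ, c (l + 2) = S := by
    have := hcs.sum_add_tsum_nat_add 2
    simpa [Finset.sum_range_succ, c0, c1] using this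
  have e3 : ∑' n : ℕ, d (n + 4) = S * S := by
    have := hdn.of_norm.sum_add_tsum_nat_add 4
    rw [hD] at this
    simpa [Finset.sum_range_succ, d0, d1, d2, d3] using this
  have e4 : ∑' k : ℕ, h (k + 6) = S * S * S := by
    have := hhn.of_norm.sum_add_tsum_nat_add 6
    rw [hH] at this
    have h6 : ∑ i ∈ Finset.range 6, h i = 0 := by
      simp [hhc, Finset.sum_range_succ, c0, c1, d0, d1, d2, d3, d5]
    rw [h6, zero_add] at this
    exact this
  have hSb : |S| ≤ 1 / 2 := by
    have hg1 : Summable fun l : ℕ => q ^ (l + 1) := (summable_nat_add_iff 1).2 hgeo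
    have : ‖∑' l : ℕ, c (l + 1)‖ ≤ ∑' l : ℕ, q ^ (l + 1) :=
      tsum_of_norm_bounded hg1.hasSum (fun l => hb (l + 1))
    have e : ∑' l : ℕ, c (l + 1) = S := e1
    rw [e, Real.norm_eq_abs] at this
    refine this.trans ?_
    simp only [pow_succ]
    rw [tsum_mul_right, tsum_geometric_of_lt_one hq0.le (by linarith), inv_mul_eq_div,
      div_le_iff₀ (by linarith)]
    linarith
  rw [e1, e2, e3, e4]
  have hS2 := abs_le.1 hSb
  refine ⟨by linarith, ?_⟩
  have hlog := Real.abs_log_sub_add_sum_range_le (x := -S) (by rw [abs_neg]; linarith) 2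
  simp only [Finset.sum_range_succ, Finset.sum_range_zero, abs_neg, sub_neg_eq_add] at hlog
  have e : Real.log (1 + S) - S + 1 / 2 * (S * S) =
    0 + (-S) ^ (0 + 1) / (((0 : ℕ) : ℝ) + 1) + (-S) ^ (1 + 1) / (((1 : ℕ) : ℝ) + 1)
      + Real.log (1 + S) := by
    norm_num; ring
  rw [e]
  refine hlog.trans ?_
  rw [div_le_iff₀ (by linarith), abs_mul, abs_mul]
  have h3 : 0 ≤ |S| ^ 3 := by positivity
  have h4 := mul_nonneg h3 (show 0 ≤ 1 - 2 * |S| by linarith)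
  ring_nf at h4 ⊢
  linarith

/-- For `m ≥ 2` there are `t₀ > 0` and `C > 0` such that for all `t > t₀` and `u ∈ [−1,1]`:
`1 + Σ_{l=1}^∞ c_{m,l}^t(u) > 0` and
`|ln(1 + Σ_{l=1}^∞ c_{m,l}^t(u)) − Σ_{l=2}^∞ c_{m,l}^t(u) + (1/2)Σ_{n=4}^∞ d_{m,n}^t(u)|
  ≤ C·|Σ_{k=6}^∞ h_{m,k}^t(u)|`. -/
theorem log_taylor_expansion (m : ℕ) (hm : 2 ≤ m) :
    ∃ t₀ > (0 : ℝ), ∃ C > (0 : ℝ), ∀ t > t₀, ∀ u ∈ Set.Icc (-1 : ℝ) 1,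
      0 < 1 + ∑' l : ℕ, cmt m t (l + 1) u ∧
      |Real.log (1 + ∑' l : ℕ, cmt m t (l + 1) u)
          - (∑' l : ℕ, cmt m t (l + 2) u)
          + (1/2) * ∑' n : ℕ, dmt m t (n + 4) u|
        ≤ C * |∑' k : ℕ, hmt m t (k + 6) u| := by
  have hm' : (2 : ℝ) ≤ m := by exact_mod_cast hm
  refine ⟨2 * Real.log (12 * (2 * m + 1)), mul_pos two_pos (Real.log_pos (by linarith)),
    2, two_pos, ?_⟩
  intro t ht u hu
  have hu' : |u| ≤ 1 := abs_le.2 hu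
  have ht0 : 0 ≤ t := le_trans (mul_nonneg two_pos.le (Real.log_nonneg (by linarith))) ht.le
  set q : ℝ := Real.exp (-t / 2) * 3 * (2 * (m : ℝ) + 1) with hq
  have hq0 : 0 < q := by positivity
  have hq4 : q ≤ 1 / 4 := by
    have h1 : 12 * (2 * (m : ℝ) + 1) ≤ Real.exp (t / 2) := by
      rw [← Real.log_le_iff_le_exp (by positivity)]
      linarith
    have h2 : Real.exp (-t / 2) * Real.exp (t / 2) = 1 := by
      rw [← Real.exp_add, ← Real.exp_zero]; congr 1; ring
    have h3 := mul_le_mul_of_nonneg_left h1 (Real.exp_pos (-t / 2)).le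
    rw [h2] at h3
    rw [hq]; linarith
  exact log_taylor_aux q hq0 hq4 (fun l => cmt m t l u) (fun n => dmt m t n u)
    (fun k => hmt m t k u) (fun l => cmt_bound m hm t ht0 u hu' l)
    (by simp [cmt]) (by simp [cmt]) (by simp [cmt]) (fun _ => rfl) (fun _ => rfl)
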